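/- arXiv:1909.05796 — 6 statements merged into one kernel-verified Lean document; each statement's English description precedes it below -/
import Mathlib

section
/- Let α₁, α₂, α₃ be distinct complex numbers. Then (α₁+α₂+α₃)² = 3(α₁α₂+α₁α₃+α₂α₃) holds if and only if exactly one of the two equations α₁e₁+α₂e₂+α₃e₃ = 0 and α₁e₂+α₂e₁+α₃e₃ = 0 holds (i.e. one of them holds but not both). -/
/-!
Let `e₁`, `e₂`, `e₃` be the distinct cube roots of `c`. Then `e₁ + e₂ + e₃ = 0` and
`e₁ * e₂ = e₃ ^ 2`, so the two linear forms multiply to `e₃ ^ 2` times the difference of the two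
sides of the quadratic equation. Hence the equation says that at least one form vanishes, while
both vanish only at `α₁ = α₂ = α₃`.
-/

section CubeRoots

variable {R : Type*} [CommRing R]

lemma sq_add_mul_add_sq_eq_zero_of_pow_three_eq [NoZeroDivisors R] {a b : R}
    (h : a ^ 3 = b ^ 3) (hab : a ≠ b) : a ^ 2 + a * b + b ^ 2 = 0 := by
  have hmul : (a - b) * (a ^ 2 + a * b + b ^ 2) = 0 := by linear_combination h
  exact (mul_eq_zero.1 hmul).resolve_left (sub_ne_zero.2 hab)

lemma add_add_eq_zero_of_pow_three_eq [NoZeroDivisors R] {a b c : R}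
    (hac : a ^ 3 = c ^ 3) (hbc : b ^ 3 = c ^ 3) (hab_ne : a ≠ b) (hac_ne : a ≠ c)
    (hbc_ne : b ≠ c) : a + b + c = 0 := by
  have hac_sq := sq_add_mul_add_sq_eq_zero_of_pow_three_eq hac hac_ne
  have hbc_sq := sq_add_mul_add_sq_eq_zero_of_pow_three_eq hbc hbc_ne
  have hmul : (a - b) * (a + b + c) = 0 := by linear_combination hac_sq - hbc_sq
  exact (mul_eq_zero.1 hmul).resolve_left (sub_ne_zero.2 hab_ne)

lemma mul_eq_sq_of_pow_three_eq [NoZeroDivisors R] {a b c : R}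
    (hac : a ^ 3 = c ^ 3) (hbc : b ^ 3 = c ^ 3) (hab_ne : a ≠ b) (hac_ne : a ≠ c)
    (hbc_ne : b ≠ c) : a * b = c ^ 2 := by
  have hsum := add_add_eq_zero_of_pow_three_eq hac hbc hab_ne hac_ne hbc_ne
  have hbc_sq := sq_add_mul_add_sq_eq_zero_of_pow_three_eq hbc hbc_ne
  linear_combination b * hsum - hbc_sq

lemma linear_form_mul_swap_eq {e₁ e₂ e₃ : R} (hsum : e₁ + e₂ + e₃ = 0)
    (hmul : e₁ * e₂ = e₃ ^ 2) (α₁ α₂ α₃ : R) :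
    (α₁ * e₁ + α₂ * e₂ + α₃ * e₃) * (α₁ * e₂ + α₂ * e₁ + α₃ * e₃) =
      e₃ ^ 2 * ((α₁ + α₂ + α₃) ^ 2 - 3 * (α₁ * α₂ + α₁ * α₃ + α₂ * α₃)) := by
  have hsq : e₁ ^ 2 + e₂ ^ 2 = -e₃ ^ 2 := by
    linear_combination (e₁ + e₂ - e₃) * hsum - 2 * hmul
  linear_combination (α₁ ^ 2 + α₂ ^ 2) * hmul + α₁ * α₂ * hsq + (α₁ + α₂) * α₃ * e₃ * hsum

lemma linear_form_and_swap_eq_zero_iff [NoZeroDivisors R] {e₁ e₂ e₃ : R}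
    (hsum : e₁ + e₂ + e₃ = 0) (h12 : e₁ ≠ e₂) (h3 : e₃ ≠ 0) (α₁ α₂ α₃ : R) :
    α₁ * e₁ + α₂ * e₂ + α₃ * e₃ = 0 ∧ α₁ * e₂ + α₂ * e₁ + α₃ * e₃ = 0 ↔
      α₁ = α₂ ∧ α₂ = α₃ := by
  constructor
  · rintro ⟨hform, hswap⟩
    have hsub : (α₁ - α₂) * (e₁ - e₂) = 0 := by linear_combination hform - hswap
    obtain rfl : α₁ = α₂ :=
      sub_eq_zero.1 ((mul_eq_zero.1 hsub).resolve_right (sub_ne_zero.2 h12))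
    have hmul : (α₁ - α₃) * e₃ = 0 := by linear_combination α₁ * hsum - hform
    exact ⟨rfl, sub_eq_zero.1 ((mul_eq_zero.1 hmul).resolve_right h3)⟩
  · rintro ⟨rfl, rfl⟩
    exact ⟨by linear_combination α₁ * hsum, by linear_combination α₁ * hsum⟩

end CubeRoots

section SixthRoots

lemma pow_three_eq_neg_one_of_isPrimitiveRoot_six {R : Type*} [CommRing R] [NoZeroDivisors R]
    {ζ : R} (hζ : IsPrimitiveRoot ζ 6) : ζ ^ 3 = -1 :=
  (hζ.pow (by norm_num) (by norm_num : 6 = 3 * 2)).eq_neg_one_of_two_right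

lemma ne_neg_one_of_isPrimitiveRoot_six {R : Type*} [CommRing R] {ζ : R}
    (hζ : IsPrimitiveRoot ζ 6) : ζ ≠ -1 := by
  rintro rfl
  exact hζ.pow_ne_one_of_pos_of_lt two_ne_zero (by norm_num) neg_one_sq

lemma inv_ne_self_of_isPrimitiveRoot_six {G : Type*} [DivisionCommMonoid G] {ζ : G}
    (hζ : IsPrimitiveRoot ζ 6) : ζ⁻¹ ≠ ζ := by
  intro hinv
  refine hζ.pow_ne_one_of_pos_of_lt two_ne_zero (by norm_num) ?_
  calc
    ζ ^ 2 = ζ⁻¹ * ζ := by rw [hinv, sq]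
    _ = 1 := (hζ.isUnit (by norm_num)).inv_mul_cancel

lemma isPrimitiveRoot_exp_pi_div_three_mul_I :
    IsPrimitiveRoot (Complex.exp ((Real.pi : ℂ) / 3 * Complex.I)) 6 := by
  convert Complex.isPrimitiveRoot_exp 6 (by norm_num) using 2
  push_cast
  ring

end SixthRoots

theorem stmt_0_general {R : Type*} [CommRing R] [NoZeroDivisors R] {α₁ α₂ α₃ e₁ e₂ e₃ c : R}
    (he₁ : e₁ ^ 3 = c) (he₂ : e₂ ^ 3 = c) (he₃ : e₃ ^ 3 = c)
    (he12 : e₁ ≠ e₂) (he13 : e₁ ≠ e₃) (he23 : e₂ ≠ e₃) (hα : ¬(α₁ = α₂ ∧ α₂ = α₃)) :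
    (α₁ + α₂ + α₃) ^ 2 = 3 * (α₁ * α₂ + α₁ * α₃ + α₂ * α₃) ↔
      Xor (α₁ * e₁ + α₂ * e₂ + α₃ * e₃ = 0) (α₁ * e₂ + α₂ * e₁ + α₃ * e₃ = 0) := by
  have h13 : e₁ ^ 3 = e₃ ^ 3 := he₁.trans he₃.symm
  have h23 : e₂ ^ 3 = e₃ ^ 3 := he₂.trans he₃.symm
  have hsum : e₁ + e₂ + e₃ = 0 := add_add_eq_zero_of_pow_three_eq h13 h23 he12 he13 he23
  have hmul : e₁ * e₂ = e₃ ^ 2 := mul_eq_sq_of_pow_three_eq h13 h23 he12 he13 he23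
  have h3 : e₃ ≠ 0 := by
    rintro rfl
    exact he13 (eq_zero_of_pow_eq_zero (h13.trans (zero_pow three_ne_zero)))
  rw [xor_iff_or_and_not_and, linear_form_and_swap_eq_zero_iff hsum he12 h3, and_iff_left hα,
    ← mul_eq_zero, linear_form_mul_swap_eq hsum hmul, mul_eq_zero_iff_left (pow_ne_zero 2 h3),
    sub_eq_zero]

theorem stmt_0 (α₁ α₂ α₃ e₁ e₂ e₃ : ℂ)
    (he₁ : e₁ = Complex.exp (-(Real.pi : ℂ) / 3 * Complex.I))
    (he₂ : e₂ = Complex.exp ((Real.pi : ℂ) / 3 * Complex.I))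
    (he₃ : e₃ = -1)
    (h12 : α₁ ≠ α₂) (h13 : α₁ ≠ α₃) (h23 : α₂ ≠ α₃) :
    (α₁ + α₂ + α₃) ^ 2 = 3 * (α₁ * α₂ + α₁ * α₃ + α₂ * α₃) ↔
      Xor' (α₁ * e₁ + α₂ * e₂ + α₃ * e₃ = 0) (α₁ * e₂ + α₂ * e₁ + α₃ * e₃ = 0) := by
  have he₂_prim : IsPrimitiveRoot e₂ 6 := he₂ ▸ isPrimitiveRoot_exp_pi_div_three_mul_I
  obtain rfl : e₁ = e₂⁻¹ := by rw [he₁, he₂, ← Complex.exp_neg, neg_div, neg_mul]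
  subst he₃
  exact stmt_0_general (pow_three_eq_neg_one_of_isPrimitiveRoot_six he₂_prim.inv)
    (pow_three_eq_neg_one_of_isPrimitiveRoot_six he₂_prim) (Odd.neg_one_pow (by decide))
    (inv_ne_self_of_isPrimitiveRoot_six he₂_prim)
    (ne_neg_one_of_isPrimitiveRoot_six he₂_prim.inv)
    (ne_neg_one_of_isPrimitiveRoot_six he₂_prim) fun h => h12 h.1
end

section
/- If α₁, α₂, α₃ are not vertices of an equilateral triangle, then for all z₁, z₂ ∈ ℂ: P(z₁,z₂,u*) = (1/3)·((α₁e₂+α₂e₁+α₃e₃)²/(α₁e₁+α₂e₂+α₃e₃))·(z₁−v*)(z₂−v*), and P(z₁,z₂,v*) = (1/3)·((α₁e₁+α₂e₂+α₃e₃)²/(α₁e₂+α₂e₁+α₃e₃))·(z₁−u*)(z₂−u*). -/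
/-!
Let `s` be the sum of the roots and let `A`, `B` be the two Lagrange resolvents
`α₁e₁ + α₂e₂ + α₃e₃` and `α₁e₂ + α₂e₁ + α₃e₃`. In the centred coordinates `tᵢ = 3zᵢ - s` the
polarization becomes
`27 P = t₁t₂t₃ - AB(t₁ + t₂ + t₃) + A³ + B³`,
while the points `u*` and `v*` become `B²/A` and `A²/B`. Substituting `t₃ = B²/A` cancels the `B³`
and leaves `(B²/A)(t₁ - A²/B)(t₂ - A²/B)`. The second identity is the first one with `e₁` and `e₂`
interchanged, which interchanges `A` with `B` and `u*` with `v*`.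
-/

section Resolvent

variable {R : Type*} [CommRing R]

/-- The Lagrange resolvent of `x, y, w` formed with the weights `e, f, -1`, intended to be the three
cube roots of `-1`; exchanging `e` and `f` gives the second resolvent. -/
def lagrangeResolvent (e f x y w : R) : R :=
  x * e + y * f + w * (-1)

variable {e f : R}

lemma lagrangeResolvent_mul_swap (hsum : e + f = 1) (hprod : e * f = 1) (x y w : R) :
    lagrangeResolvent e f x y w * lagrangeResolvent f e x y w =
      (x + y + w) ^ 2 - 3 * (x * y + x * w + y * w) := by
  obtain rfl : f = 1 - e := eq_sub_of_add_eq' hsum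
  unfold lagrangeResolvent
  linear_combination (x - y) ^ 2 * hprod

lemma lagrangeResolvent_add_swap (hsum : e + f = 1) (x y w : R) :
    lagrangeResolvent e f x y w + lagrangeResolvent f e x y w = x + y - 2 * w := by
  unfold lagrangeResolvent
  linear_combination (x + y) * hsum

lemma lagrangeResolvent_pow_three_add_swap (hsum : e + f = 1) (hprod : e * f = 1) (x y w : R) :
    lagrangeResolvent e f x y w ^ 3 + lagrangeResolvent f e x y w ^ 3 =
      -2 * (x + y + w) ^ 3 + 9 * (x + y + w) * (x * y + x * w + y * w) - 27 * (x * y * w) := by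
  set A := lagrangeResolvent e f x y w
  set B := lagrangeResolvent f e x y w
  calc A ^ 3 + B ^ 3 = (A + B) * ((A + B) ^ 2 - 3 * (A * B)) := by ring
    _ = _ := by
      rw [lagrangeResolvent_add_swap hsum, lagrangeResolvent_mul_swap hsum hprod]
      ring

lemma lagrangeResolvent_swap_sq (hsum : e + f = 1) (hprod : e * f = 1) (x y w : R) :
    lagrangeResolvent f e x y w ^ 2 =
      -3 * (x * y * (-1) + x * w * f + y * w * e) -
        (x + y + w) * lagrangeResolvent e f x y w := by
  obtain rfl : f = 1 - e := eq_sub_of_add_eq' hsum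
  unfold lagrangeResolvent
  linear_combination -(x - y) ^ 2 * hprod

end Resolvent

section Polarization

variable {K : Type*} [Field K]

/-- The polarization of the cubic `z³ + az² + bz + c`: the symmetric polynomial, affine in each
variable, that restricts to the cubic on the diagonal. The division by `3` restricts its meaning to
characteristic different from `3`. -/
def cubicPolarization (a b c z₁ z₂ z₃ : K) : K :=
  z₁ * z₂ * z₃ + a / 3 * (z₁ * z₂ + z₂ * z₃ + z₃ * z₁) + b / 3 * (z₁ + z₂ + z₃) + c

/-- One root of the Hessian of the cubic with roots `x, y, w`; the other one is obtained by
exchanging the cube roots `e` and `f` of `-1`. The pairs `(e₁, e₂)` and `(e₂, e₁)` give the points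
`u*` and `v*`. Division by a vanishing resolvent gives the junk value `0`. -/
def hessianRoot (e f x y w : K) : K :=
  -((x * y * (-1) + x * w * f + y * w * e) / lagrangeResolvent e f x y w)

lemma cubicPolarization_eq_depressed (h3 : (3 : K) ≠ 0) (a b c z₁ z₂ z₃ : K) :
    27 * cubicPolarization a b c z₁ z₂ z₃ =
      (3 * z₁ + a) * (3 * z₂ + a) * (3 * z₃ + a)
        - (a ^ 2 - 3 * b) * ((3 * z₁ + a) + (3 * z₂ + a) + (3 * z₃ + a))
        + (2 * a ^ 3 - 9 * a * b + 27 * c) := by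
  unfold cubicPolarization
  field_simp
  ring

variable {e f x y w : K}

lemma cubicPolarization_eq_lagrangeResolvent (h3 : (3 : K) ≠ 0) (hsum : e + f = 1)
    (hprod : e * f = 1) (z₁ z₂ z₃ : K) :
    27 * cubicPolarization (-(x + y + w)) (x * y + x * w + y * w) (-(x * y * w)) z₁ z₂ z₃ =
      (3 * z₁ - (x + y + w)) * (3 * z₂ - (x + y + w)) * (3 * z₃ - (x + y + w))
        - lagrangeResolvent e f x y w * lagrangeResolvent f e x y w *
          ((3 * z₁ - (x + y + w)) + (3 * z₂ - (x + y + w)) + (3 * z₃ - (x + y + w)))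
        + (lagrangeResolvent e f x y w ^ 3 + lagrangeResolvent f e x y w ^ 3) := by
  rw [cubicPolarization_eq_depressed h3, lagrangeResolvent_mul_swap hsum hprod,
    lagrangeResolvent_pow_three_add_swap hsum hprod]
  ring

lemma three_mul_hessianRoot_sub (hsum : e + f = 1) (hprod : e * f = 1)
    (hA : lagrangeResolvent e f x y w ≠ 0) :
    3 * hessianRoot e f x y w - (x + y + w) =
      lagrangeResolvent f e x y w ^ 2 / lagrangeResolvent e f x y w := by
  rw [lagrangeResolvent_swap_sq hsum hprod, hessianRoot]
  field_simp

lemma depressed_polarization_eq_mul {A B : K} (hA : A ≠ 0) (hB : B ≠ 0) (t₁ t₂ : K) :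
    t₁ * t₂ * (B ^ 2 / A) - A * B * (t₁ + t₂ + B ^ 2 / A) + (A ^ 3 + B ^ 3) =
      B ^ 2 / A * ((t₁ - A ^ 2 / B) * (t₂ - A ^ 2 / B)) := by
  field_simp
  ring

theorem cubicPolarization_hessianRoot (h3 : (3 : K) ≠ 0) (hsum : e + f = 1) (hprod : e * f = 1)
    (hA : lagrangeResolvent e f x y w ≠ 0) (hB : lagrangeResolvent f e x y w ≠ 0) (z₁ z₂ : K) :
    cubicPolarization (-(x + y + w)) (x * y + x * w + y * w) (-(x * y * w)) z₁ z₂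
        (hessianRoot e f x y w) =
      1 / 3 * (lagrangeResolvent f e x y w ^ 2 / lagrangeResolvent e f x y w) *
        ((z₁ - hessianRoot f e x y w) * (z₂ - hessianRoot f e x y w)) := by
  have h27 : (27 : K) ≠ 0 := by
    rw [show (27 : K) = 3 ^ 3 by norm_num]
    exact pow_ne_zero 3 h3
  have hv : 3 * hessianRoot f e x y w - (x + y + w) =
      lagrangeResolvent e f x y w ^ 2 / lagrangeResolvent f e x y w :=
    three_mul_hessianRoot_sub ((add_comm f e).trans hsum) ((mul_comm f e).trans hprod) hB
  apply mul_left_cancel₀ h27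
  rw [cubicPolarization_eq_lagrangeResolvent h3 hsum hprod,
    three_mul_hessianRoot_sub hsum hprod hA, depressed_polarization_eq_mul hA hB, ← hv]
  field_simp
  ring

theorem stmt_2_general {α₁ α₂ α₃ e₁ e₂ e₃ a b c u v : K} {P : K → K → K → K} (h3 : (3 : K) ≠ 0)
    (hsum : e₁ + e₂ = 1) (hprod : e₁ * e₂ = 1) (he₃ : e₃ = -1)
    (ha : a = -(α₁ + α₂ + α₃))
    (hb : b = α₁ * α₂ + α₁ * α₃ + α₂ * α₃)
    (hc : c = -(α₁ * α₂ * α₃))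
    (hP : ∀ z₁ z₂ z₃, P z₁ z₂ z₃ =
      z₁ * z₂ * z₃ + a / 3 * (z₁ * z₂ + z₂ * z₃ + z₃ * z₁) + b / 3 * (z₁ + z₂ + z₃) + c)
    (hu : u = -((α₁ * α₂ * e₃ + α₁ * α₃ * e₂ + α₂ * α₃ * e₁) /
      (α₁ * e₁ + α₂ * e₂ + α₃ * e₃)))
    (hv : v = -((α₁ * α₂ * e₃ + α₁ * α₃ * e₁ + α₂ * α₃ * e₂) /
      (α₁ * e₂ + α₂ * e₁ + α₃ * e₃)))
    (hne₁ : α₁ * e₁ + α₂ * e₂ + α₃ * e₃ ≠ 0)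
    (hne₂ : α₁ * e₂ + α₂ * e₁ + α₃ * e₃ ≠ 0) (z₁ z₂ : K) :
    P z₁ z₂ u = 1 / 3 * ((α₁ * e₂ + α₂ * e₁ + α₃ * e₃) ^ 2 /
        (α₁ * e₁ + α₂ * e₂ + α₃ * e₃)) * ((z₁ - v) * (z₂ - v)) ∧
    P z₁ z₂ v = 1 / 3 * ((α₁ * e₁ + α₂ * e₂ + α₃ * e₃) ^ 2 /
        (α₁ * e₂ + α₂ * e₁ + α₃ * e₃)) * ((z₁ - u) * (z₂ - u)) := by
  subst he₃ ha hb hc hu hv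
  rw [hP, hP]
  exact ⟨cubicPolarization_hessianRoot h3 hsum hprod hne₁ hne₂ z₁ z₂,
    cubicPolarization_hessianRoot h3 ((add_comm e₂ e₁).trans hsum)
      ((mul_comm e₂ e₁).trans hprod) hne₂ hne₁ z₁ z₂⟩

end Polarization

lemma exp_neg_add_exp_pi_div_three_mul_I :
    Complex.exp (-(Real.pi : ℂ) / 3 * Complex.I) + Complex.exp ((Real.pi : ℂ) / 3 * Complex.I) =
      1 := by
  have hcos : Complex.cos ((Real.pi : ℂ) / 3) = 1 / 2 := by
    rw [← Complex.ofReal_ofNat, ← Complex.ofReal_div, ← Complex.ofReal_cos, Real.cos_pi_div_three]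
    norm_num
  rw [neg_div, add_comm, ← Complex.two_cos, hcos]
  norm_num

lemma exp_neg_mul_exp_pi_div_three_mul_I :
    Complex.exp (-(Real.pi : ℂ) / 3 * Complex.I) * Complex.exp ((Real.pi : ℂ) / 3 * Complex.I) =
      1 := by
  rw [neg_div, neg_mul, Complex.exp_neg, inv_mul_cancel₀ (Complex.exp_ne_zero _)]

theorem stmt_2 (α₁ α₂ α₃ e₁ e₂ e₃ a b c u v : ℂ) (P : ℂ → ℂ → ℂ → ℂ)
    (he₁ : e₁ = Complex.exp (-(Real.pi : ℂ) / 3 * Complex.I))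
    (he₂ : e₂ = Complex.exp ((Real.pi : ℂ) / 3 * Complex.I))
    (he₃ : e₃ = -1)
    (h12 : α₁ ≠ α₂) (h13 : α₁ ≠ α₃) (h23 : α₂ ≠ α₃)
    (ha : a = -(α₁ + α₂ + α₃))
    (hb : b = α₁ * α₂ + α₁ * α₃ + α₂ * α₃)
    (hc : c = -(α₁ * α₂ * α₃))
    (hP : ∀ z₁ z₂ z₃, P z₁ z₂ z₃ =
      z₁ * z₂ * z₃ + a / 3 * (z₁ * z₂ + z₂ * z₃ + z₃ * z₁) + b / 3 * (z₁ + z₂ + z₃) + c)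
    (hu : u = -((α₁ * α₂ * e₃ + α₁ * α₃ * e₂ + α₂ * α₃ * e₁) /
      (α₁ * e₁ + α₂ * e₂ + α₃ * e₃)))
    (hv : v = -((α₁ * α₂ * e₃ + α₁ * α₃ * e₁ + α₂ * α₃ * e₂) /
      (α₁ * e₂ + α₂ * e₁ + α₃ * e₃)))
    (hne₁ : α₁ * e₁ + α₂ * e₂ + α₃ * e₃ ≠ 0)
    (hne₂ : α₁ * e₂ + α₂ * e₁ + α₃ * e₃ ≠ 0) :
    ∀ z₁ z₂ : ℂ,
      P z₁ z₂ u = 1 / 3 * ((α₁ * e₂ + α₂ * e₁ + α₃ * e₃) ^ 2 /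
          (α₁ * e₁ + α₂ * e₂ + α₃ * e₃)) * ((z₁ - v) * (z₂ - v)) ∧
      P z₁ z₂ v = 1 / 3 * ((α₁ * e₁ + α₂ * e₂ + α₃ * e₃) ^ 2 /
          (α₁ * e₂ + α₂ * e₁ + α₃ * e₃)) * ((z₁ - u) * (z₂ - u)) :=
  stmt_2_general three_ne_zero (by rw [he₁, he₂, exp_neg_add_exp_pi_div_three_mul_I])
    (by rw [he₁, he₂, exp_neg_mul_exp_pi_div_three_mul_I]) he₃ ha hb hc hP hu hv hne₁ hne₂
end

section
/- There is no z ∈ ℂ satisfying simultaneously P₁(z,z) = 0 and P₂(z,z) = 0; equivalently, the polynomials 3z² + 2az + b and az² + 2bz + 3c have no common complex root. -/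
/-!
Let `p = z³ + a z² + b z + c`. Then `3 P₁(z, z) = p'(z)`, and `3 P₂(z, z) = 3 p(z) - z p'(z)` is the
polar derivative of `p` with respect to `0`. At a common zero both `p'` and `p` vanish, so `p` would
have a multiple root.
-/

open Polynomial

section PolarDerivative

variable {R : Type*} [CommRing R]

/-- Laguerre's polar derivative, with respect to the pole `ζ`, of a polynomial `p` regarded as
having degree `n`: its value at `z` is `n` times the polarization of `p` at `(ζ, z, …, z)`. The
formal degree `n` is a parameter and need not be `p.natDegree`. -/
noncomputable def polarDerivative (n : ℕ) (ζ : R) (p : R[X]) : R[X] :=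
  (n : R[X]) * p + (C ζ - X) * derivative p

theorem eval_polarDerivative (n : ℕ) (ζ z : R) (p : R[X]) :
    (polarDerivative n ζ p).eval z = n * p.eval z + (ζ - z) * (derivative p).eval z := by
  simp [polarDerivative]

theorem eval_polarDerivative_ne_zero_of_separable {n : ℕ} [NeZero (n : R)] {p : R[X]}
    (hp : p.Separable) (ζ : R) {z : R} (hz : (derivative p).eval z = 0) :
    (polarDerivative n ζ p).eval z ≠ 0 := by
  have isUnit_eval : IsUnit (p.eval z) := by
    have coprime_evals : IsCoprime (p.eval z) ((derivative p).eval z) :=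
      IsCoprime.map hp (evalRingHom z)
    rwa [hz, isCoprime_zero_right] at coprime_evals
  rw [eval_polarDerivative, hz, mul_zero, add_zero, ne_eq, isUnit_eval.mul_left_eq_zero]
  exact NeZero.ne (n : R)

end PolarDerivative

section Cubic

variable {R : Type*} [CommRing R]

theorem eval_derivative_cubic (P : Cubic R) (z : R) :
    (derivative P.toPoly).eval z = 3 * P.a * z ^ 2 + 2 * P.b * z + P.c := by
  simp only [Cubic.toPoly, derivative_add, derivative_C_mul, derivative_X_pow, derivative_X,
    derivative_C, eval_add, eval_mul, eval_C, eval_pow, eval_X, eval_one, eval_zero, Nat.cast_ofNat]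
  ring

theorem eval_polarDerivative_zero_cubic (P : Cubic R) (z : R) :
    (polarDerivative 3 0 P.toPoly).eval z = P.b * z ^ 2 + 2 * P.c * z + 3 * P.d := by
  rw [eval_polarDerivative, eval_derivative_cubic]
  simp only [Cubic.toPoly, eval_add, eval_mul, eval_C, eval_pow, eval_X, Nat.cast_ofNat]
  ring

theorem not_common_root_of_separable_cubic [NeZero (3 : R)] {P : Cubic R}
    (hP : P.toPoly.Separable) (z : R) :
    ¬(3 * P.a * z ^ 2 + 2 * P.b * z + P.c = 0 ∧ P.b * z ^ 2 + 2 * P.c * z + 3 * P.d = 0) := by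
  have : NeZero ((3 : ℕ) : R) := by simpa only [Nat.cast_ofNat]
  rw [← eval_derivative_cubic, ← eval_polarDerivative_zero_cubic]
  exact fun ⟨h₁, h₂⟩ ↦ eval_polarDerivative_ne_zero_of_separable hP 0 h₁ h₂

theorem separable_prod_three_X_sub_C {x y z : R}
    (hxy : IsUnit (x - y)) (hxz : IsUnit (x - z)) (hyz : IsUnit (y - z)) :
    ((X - C x) * (X - C y) * (X - C z)).Separable := by
  have coprime_xy := isCoprime_X_sub_C_of_isUnit_sub hxy
  have coprime_xz := isCoprime_X_sub_C_of_isUnit_sub hxz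
  have coprime_yz := isCoprime_X_sub_C_of_isUnit_sub hyz
  exact (separable_X_sub_C.mul separable_X_sub_C coprime_xy).mul separable_X_sub_C
    (coprime_xz.mul_left coprime_yz)

end Cubic

theorem stmt_8_general {K : Type*} [Field K] [NeZero (3 : K)]
    (α₁ α₂ α₃ a b c : K) (P₁ P₂ : K → K → K)
    (h12 : α₁ ≠ α₂) (h13 : α₁ ≠ α₃) (h23 : α₂ ≠ α₃)
    (ha : a = -(α₁ + α₂ + α₃))
    (hb : b = α₁ * α₂ + α₁ * α₃ + α₂ * α₃)
    (hc : c = -(α₁ * α₂ * α₃))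
    (hP₁ : ∀ z₁ z₂, P₁ z₁ z₂ = z₁ * z₂ + a / 3 * (z₁ + z₂) + b / 3)
    (hP₂ : ∀ z₁ z₂, P₂ z₁ z₂ = a / 3 * (z₁ * z₂) + b / 3 * (z₁ + z₂) + c) :
    (∀ z : K, ¬(P₁ z z = 0 ∧ P₂ z z = 0)) ∧
    (∀ z : K, ¬(3 * z ^ 2 + 2 * a * z + b = 0 ∧ a * z ^ 2 + 2 * b * z + 3 * c = 0)) := by
  have separable : (⟨1, a, b, c⟩ : Cubic K).toPoly.Separable := by
    rw [ha, hb, hc, ← Cubic.prod_X_sub_C_eq]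
    exact separable_prod_three_X_sub_C (sub_ne_zero.mpr h12).isUnit (sub_ne_zero.mpr h13).isUnit
      (sub_ne_zero.mpr h23).isUnit
  have no_common_root (z : K) :
      ¬(3 * z ^ 2 + 2 * a * z + b = 0 ∧ a * z ^ 2 + 2 * b * z + 3 * c = 0) := by
    simpa only [mul_one] using not_common_root_of_separable_cubic separable z
  have three_ne_zero : (3 : K) ≠ 0 := NeZero.ne 3
  have diagonal₁ (z : K) : 3 * P₁ z z = 3 * z ^ 2 + 2 * a * z + b := by
    rw [hP₁]; field_simp; ring
  have diagonal₂ (z : K) : 3 * P₂ z z = a * z ^ 2 + 2 * b * z + 3 * c := by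
    rw [hP₂]; field_simp; ring
  refine ⟨fun z ⟨h₁, h₂⟩ ↦ no_common_root z ⟨?_, ?_⟩, no_common_root⟩
  · rw [← diagonal₁, h₁, mul_zero]
  · rw [← diagonal₂, h₂, mul_zero]

theorem stmt_8 (α₁ α₂ α₃ a b c : ℂ) (P₁ P₂ : ℂ → ℂ → ℂ)
    (h12 : α₁ ≠ α₂) (h13 : α₁ ≠ α₃) (h23 : α₂ ≠ α₃)
    (ha : a = -(α₁ + α₂ + α₃))
    (hb : b = α₁ * α₂ + α₁ * α₃ + α₂ * α₃)
    (hc : c = -(α₁ * α₂ * α₃))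
    (hP₁ : ∀ z₁ z₂, P₁ z₁ z₂ = z₁ * z₂ + a / 3 * (z₁ + z₂) + b / 3)
    (hP₂ : ∀ z₁ z₂, P₂ z₁ z₂ = a / 3 * (z₁ * z₂) + b / 3 * (z₁ + z₂) + c) :
    (∀ z : ℂ, ¬(P₁ z z = 0 ∧ P₂ z z = 0)) ∧
    (∀ z : ℂ, ¬(3 * z ^ 2 + 2 * a * z + b = 0 ∧ a * z ^ 2 + 2 * b * z + 3 * c = 0)) :=
  stmt_8_general α₁ α₂ α₃ a b c P₁ P₂ h12 h13 h23 ha hb hc hP₁ hP₂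
end

section
/- If the distinct complex numbers α₁, α₂, α₃ are vertices of an equilateral triangle (i.e. (α₁+α₂+α₃)² = 3(α₁α₂+α₁α₃+α₂α₃), equivalently a² = 3b), then there is no pair (z₁, z₂) ∈ ℂ² satisfying the system P₁(z₁,z₂) = 0 and P₂(z₁,z₂) = 0. -/
/-!
The polar form of the cubic `x ^ 3 + a * x ^ 2 + b * x + c`, symmetric and affine in each of
`x`, `z₁`, `z₂`, is `x * P₁ z₁ z₂ + P₂ z₁ z₂`. Write `h = a / 3`. When `a ^ 2 = 3 * b`, we have
`P₁ z₁ z₂ = (z₁ + h) * (z₂ + h)` and `P₂ z₁ z₂ = h * P₁ z₁ z₂ + (c - h ^ 3)`, so a common zero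
forces `c = h ^ 3`. The cubic is then `(x + h) ^ 3`, whose roots all coincide.
-/

section CommRing

variable {R : Type*} [CommRing R] {h c z w α β γ : R}

lemma eq_pow_three_of_polar_eq_zero (h₁ : z * w + h * (z + w) + h ^ 2 = 0)
    (h₂ : h * (z * w) + h ^ 2 * (z + w) + c = 0) : c = h ^ 3 := by
  linear_combination h₂ - h * h₁

lemma prod_sub_eq_add_pow_three (hsum : α + β + γ = -(3 * h))
    (hpairs : α * β + α * γ + β * γ = 3 * h ^ 2) (hprod : α * β * γ = -h ^ 3) (x : R) :
    (x - α) * (x - β) * (x - γ) = (x + h) ^ 3 := by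
  linear_combination -x ^ 2 * hsum + x * hpairs - hprod

lemma eq_neg_of_prod_sub_eq_add_pow_three [IsReduced R]
    (hcube : ∀ x, (x - α) * (x - β) * (x - γ) = (x + h) ^ 3) : α = -h ∧ β = -h := by
  have hα : (α + h) ^ 3 = 0 := by rw [← hcube, sub_self, zero_mul, zero_mul]
  have hβ : (β + h) ^ 3 = 0 := by rw [← hcube, sub_self, mul_zero, zero_mul]
  exact ⟨eq_neg_of_add_eq_zero_left (eq_zero_of_pow_eq_zero hα),
    eq_neg_of_add_eq_zero_left (eq_zero_of_pow_eq_zero hβ)⟩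

end CommRing

theorem stmt_10_general {K : Type*} [Field K] [NeZero (3 : K)] {α₁ α₂ α₃ a b c : K}
    {P₁ P₂ : K → K → K} (h12 : α₁ ≠ α₂)
    (ha : a = -(α₁ + α₂ + α₃))
    (hb : b = α₁ * α₂ + α₁ * α₃ + α₂ * α₃)
    (hc : c = -(α₁ * α₂ * α₃))
    (hP₁ : ∀ z₁ z₂, P₁ z₁ z₂ = z₁ * z₂ + a / 3 * (z₁ + z₂) + b / 3)
    (hP₂ : ∀ z₁ z₂, P₂ z₁ z₂ = a / 3 * (z₁ * z₂) + b / 3 * (z₁ + z₂) + c)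
    (hequi : (α₁ + α₂ + α₃) ^ 2 = 3 * (α₁ * α₂ + α₁ * α₃ + α₂ * α₃)) (z₁ z₂ : K) :
    ¬(P₁ z₁ z₂ = 0 ∧ P₂ z₁ z₂ = 0) := by
  rintro ⟨hz₁, hz₂⟩
  have h3 : (3 : K) ≠ 0 := three_ne_zero
  have a_eq : a = 3 * (a / 3) := (mul_div_cancel₀ a h3).symm
  have b_div_three : b / 3 = (a / 3) ^ 2 := by
    rw [ha, hb]
    field_simp
    linear_combination -hequi
  rw [hP₁, b_div_three] at hz₁
  rw [hP₂, b_div_three] at hz₂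
  have c_eq : c = (a / 3) ^ 3 := eq_pow_three_of_polar_eq_zero hz₁ hz₂
  have hcube (x : K) : (x - α₁) * (x - α₂) * (x - α₃) = (x + a / 3) ^ 3 :=
    prod_sub_eq_add_pow_three (by linear_combination ha - a_eq)
      (by rw [← hb, ← b_div_three, mul_div_cancel₀ b h3]) (by linear_combination hc - c_eq) x
  obtain ⟨hα₁, hα₂⟩ := eq_neg_of_prod_sub_eq_add_pow_three hcube
  exact h12 (hα₁.trans hα₂.symm)

theorem stmt_10 (α₁ α₂ α₃ a b c : ℂ) (P₁ P₂ : ℂ → ℂ → ℂ)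
    (h12 : α₁ ≠ α₂) (h13 : α₁ ≠ α₃) (h23 : α₂ ≠ α₃)
    (ha : a = -(α₁ + α₂ + α₃))
    (hb : b = α₁ * α₂ + α₁ * α₃ + α₂ * α₃)
    (hc : c = -(α₁ * α₂ * α₃))
    (hP₁ : ∀ z₁ z₂, P₁ z₁ z₂ = z₁ * z₂ + a / 3 * (z₁ + z₂) + b / 3)
    (hP₂ : ∀ z₁ z₂, P₂ z₁ z₂ = a / 3 * (z₁ * z₂) + b / 3 * (z₁ + z₂) + c)
    (hequi : (α₁ + α₂ + α₃) ^ 2 = 3 * (α₁ * α₂ + α₁ * α₃ + α₂ * α₃)) :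
    ∀ z₁ z₂ : ℂ, ¬(P₁ z₁ z₂ = 0 ∧ P₂ z₁ z₂ = 0) :=
  stmt_10_general h12 ha hb hc hP₁ hP₂ hequi
end

section
/- Suppose α₁, α₂, α₃ are not vertices of an equilateral triangle. Let w₁, w₂ ∈ ℂ with w₁ ≠ w₂, 3w₁² + 2aw₁ + b ≠ 0, 3w₂² + 2aw₂ + b ≠ 0, 2(a²−3b)w₁ + (ab−9c) ≠ 0, and Q(w₁) = Q(w₂). Then G(w₁) = w₂. -/
/-!
`Q` is a quotient of two quadratics, so its fibres have at most two points and `G` is the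
involution exchanging them. Clearing denominators in `Q w₁ = Q w₂` gives a polynomial antisymmetric
in `w₁, w₂`; dividing it by `w₁ - w₂` leaves the Bezoutian of the two quadratics, which is symmetric
and of degree at most one in each variable. Solving for `w₂` expresses it as a Möbius function of
`w₁`.
-/

theorem quadratic_mul_quadratic_sub {R : Type*} [CommRing R] (p₂ p₁ p₀ q₂ q₁ q₀ w z : R) :
    (p₂ * w ^ 2 + p₁ * w + p₀) * (q₂ * z ^ 2 + q₁ * z + q₀) -
        (p₂ * z ^ 2 + p₁ * z + p₀) * (q₂ * w ^ 2 + q₁ * w + q₀) =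
      (w - z) * ((p₂ * q₁ - p₁ * q₂) * (w * z) + (p₂ * q₀ - p₀ * q₂) * (w + z) +
        (p₁ * q₀ - p₀ * q₁)) := by
  ring

section Field

variable {K : Type*} [Field K]

theorem quadratic_div_quadratic_eq_iff {p₂ p₁ p₀ q₂ q₁ q₀ w z : K} (hwz : w ≠ z)
    (hw : q₂ * w ^ 2 + q₁ * w + q₀ ≠ 0) (hz : q₂ * z ^ 2 + q₁ * z + q₀ ≠ 0) :
    (p₂ * w ^ 2 + p₁ * w + p₀) / (q₂ * w ^ 2 + q₁ * w + q₀) =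
        (p₂ * z ^ 2 + p₁ * z + p₀) / (q₂ * z ^ 2 + q₁ * z + q₀) ↔
      (p₂ * q₁ - p₁ * q₂) * (w * z) + (p₂ * q₀ - p₀ * q₂) * (w + z) +
        (p₁ * q₀ - p₀ * q₁) = 0 := by
  rw [div_eq_div_iff hw hz, ← sub_eq_zero, quadratic_mul_quadratic_sub, mul_eq_zero,
    or_iff_right (sub_ne_zero.mpr hwz)]

theorem symm_biaffine_eq_zero_iff_neg_div_eq {r s t w z : K} (h : r * w + s ≠ 0) :
    r * (w * z) + s * (w + z) + t = 0 ↔ -((s * w + t) / (r * w + s)) = z := by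
  have collect_z : r * (w * z) + s * (w + z) + t = s * w + t + z * (r * w + s) := by ring
  rw [collect_z, ← neg_div, div_eq_iff h, neg_eq_iff_add_eq_zero]

theorem stmt_15_general {a b c : K} {Q G : K → K}
    (hQ : ∀ z, Q z = -((a * z ^ 2 + 2 * b * z + 3 * c) / (3 * z ^ 2 + 2 * a * z + b)))
    (hG : ∀ z, G z = -(((a * b - 9 * c) * z + 2 * (b ^ 2 - 3 * c * a)) /
      (2 * (a ^ 2 - 3 * b) * z + (a * b - 9 * c))))
    {w₁ w₂ : K} (hw : w₁ ≠ w₂)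
    (hd₁ : 3 * w₁ ^ 2 + 2 * a * w₁ + b ≠ 0)
    (hd₂ : 3 * w₂ ^ 2 + 2 * a * w₂ + b ≠ 0)
    (hdG : 2 * (a ^ 2 - 3 * b) * w₁ + (a * b - 9 * c) ≠ 0)
    (hQQ : Q w₁ = Q w₂) :
    G w₁ = w₂ := by
  rw [hQ, hQ, neg_inj, quadratic_div_quadratic_eq_iff hw hd₁ hd₂] at hQQ
  rw [hG, ← symm_biaffine_eq_zero_iff_neg_div_eq hdG]
  linear_combination hQQ

end Field

theorem stmt_15 (α₁ α₂ α₃ e₁ e₂ e₃ a b c : ℂ) (Q G : ℂ → ℂ)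
    (he₁ : e₁ = Complex.exp (-(Real.pi : ℂ) / 3 * Complex.I))
    (he₂ : e₂ = Complex.exp ((Real.pi : ℂ) / 3 * Complex.I))
    (he₃ : e₃ = -1)
    (h12 : α₁ ≠ α₂) (h13 : α₁ ≠ α₃) (h23 : α₂ ≠ α₃)
    (ha : a = -(α₁ + α₂ + α₃))
    (hb : b = α₁ * α₂ + α₁ * α₃ + α₂ * α₃)
    (hc : c = -(α₁ * α₂ * α₃))
    (hQ : ∀ z, Q z = -((a * z ^ 2 + 2 * b * z + 3 * c) / (3 * z ^ 2 + 2 * a * z + b)))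
    (hG : ∀ z, G z = -(((a * b - 9 * c) * z + 2 * (b ^ 2 - 3 * c * a)) /
      (2 * (a ^ 2 - 3 * b) * z + (a * b - 9 * c))))
    (hne₁ : α₁ * e₁ + α₂ * e₂ + α₃ * e₃ ≠ 0)
    (hne₂ : α₁ * e₂ + α₂ * e₁ + α₃ * e₃ ≠ 0)
    (w₁ w₂ : ℂ) (hw : w₁ ≠ w₂)
    (hd₁ : 3 * w₁ ^ 2 + 2 * a * w₁ + b ≠ 0)
    (hd₂ : 3 * w₂ ^ 2 + 2 * a * w₂ + b ≠ 0)
    (hdG : 2 * (a ^ 2 - 3 * b) * w₁ + (a * b - 9 * c) ≠ 0)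
    (hQQ : Q w₁ = Q w₂) :
    G w₁ = w₂ :=
  stmt_15_general hQ hG hw hd₁ hd₂ hdG hQQ
end

section
/- Let w₁, w₂, w₃ be nonzero complex numbers with w₁², w₂², w₃² pairwise distinct, and assume detB∘ ≠ 0; set u₀ := w₁w₂w₃ · detA∘ / detB∘. Then there exist α, β ∈ ℂ and f, e ∈ ℝ, not all zero, such that α·u² + conj(α)·conj(u)² + β·u + conj(β)·conj(u) + f·u·conj(u) + e = 0 holds for every u in the set {w₁w₂, −w₁w₂, w₁w₃, −w₁w₃, w₂w₃, −w₂w₃, u₀}; that is, the real conic determined by the six points ±w₁w₂, ±w₁w₃, ±w₂w₃ also passes through u₀. -/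
open ComplexConjugate

/-!
A conic that is symmetric about the origin has an equation in the span of the functions `u²`,
`conj u²`, `u * conj u` and `1`, so the one through `±p`, `±q`, `±r` is the vanishing locus of the
determinant `D u` whose rows are the values of these functions at `u`, `p`, `q`, `r`. Conjugation
swaps two columns, so `i D u = 0` is a real equation.

For `p, q, r = w₁w₂, w₁w₃, w₂w₃` the coefficient of `u²` in `D u` is `conj (w₁w₂w₃) * detB∘`. This
is nonzero, so the equation is nontrivial, and it cancels the denominator of one factor `u₀` in
`u₀²`; after this cancellation `D u₀ = 0` is a polynomial identity in the `wᵢ` and their conjugates.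
Geometrically, `-u₀` is in general the fourth point of the conic on the circle through `p`, `q`
and `r`.
-/

section CommStarRing

variable {R : Type*} [CommRing R] [StarRing R]

/-- The equation, as a function of `u`, of the conic symmetric about the origin through the points
`p`, `q`, `r`. It vanishes identically when these points do not determine such a conic. -/
def centralConicDet (p q r u : R) : R :=
  Matrix.det
    !![u ^ 2, conj u ^ 2, u * conj u, 1;
       p ^ 2, conj p ^ 2, p * conj p, 1;
       q ^ 2, conj q ^ 2, q * conj q, 1;
       r ^ 2, conj r ^ 2, r * conj r, 1]

/-- The coefficient of `u ^ 2` in `centralConicDet p q r u`; the coefficient of `conj u ^ 2` is the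
negative of its conjugate. -/
def centralConicSqCoeff (p q r : R) : R :=
  Matrix.det
    !![conj p ^ 2, p * conj p, 1;
       conj q ^ 2, q * conj q, 1;
       conj r ^ 2, r * conj r, 1]

/-- The coefficient of `u * conj u` in `centralConicDet p q r u`. -/
def centralConicNormCoeff (p q r : R) : R :=
  Matrix.det
    !![p ^ 2, conj p ^ 2, 1;
       q ^ 2, conj q ^ 2, 1;
       r ^ 2, conj r ^ 2, 1]

/-- The negative of the constant coefficient of `centralConicDet p q r u`. -/
def centralConicConstMinor (p q r : R) : R :=
  Matrix.det
    !![p ^ 2, conj p ^ 2, p * conj p;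
       q ^ 2, conj q ^ 2, q * conj q;
       r ^ 2, conj r ^ 2, r * conj r]

/-- The determinant `detA∘` of the paper. -/
def detACirc (w₁ w₂ w₃ : R) : R :=
  Matrix.det
    !![conj w₁ * conj w₂, conj w₁ * conj w₃, conj w₂ * conj w₃;
       w₃, w₂, w₁;
       conj w₃, conj w₂, conj w₁]

/-- The determinant `detB∘` of the paper. -/
def detBCirc (w₁ w₂ w₃ : R) : R :=
  Matrix.det
    !![w₁ * (conj w₁) ^ 2, w₂ * (conj w₂) ^ 2, w₃ * (conj w₃) ^ 2;
       conj w₁, conj w₂, conj w₃;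
       w₁, w₂, w₃]

theorem centralConicDet_neg (p q r u : R) :
    centralConicDet p q r (-u) = centralConicDet p q r u := by
  simp only [centralConicDet, map_neg, even_two.neg_pow, neg_mul_neg]

theorem centralConicDet_self_left (p q r : R) : centralConicDet p q r p = 0 :=
  Matrix.det_zero_of_row_eq (i := 0) (j := 1) (by decide) rfl

theorem centralConicDet_self_middle (p q r : R) : centralConicDet p q r q = 0 :=
  Matrix.det_zero_of_row_eq (i := 0) (j := 2) (by decide) rfl

theorem centralConicDet_self_right (p q r : R) : centralConicDet p q r r = 0 :=
  Matrix.det_zero_of_row_eq (i := 0) (j := 3) (by decide) rfl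

theorem centralConicDet_eq (p q r u : R) :
    centralConicDet p q r u =
      centralConicSqCoeff p q r * u ^ 2 - conj (centralConicSqCoeff p q r) * conj u ^ 2 +
        centralConicNormCoeff p q r * (u * conj u) - centralConicConstMinor p q r := by
  rw [centralConicDet, Matrix.det_succ_row_zero, Fin.sum_univ_four]
  simp only [centralConicSqCoeff, centralConicNormCoeff, centralConicConstMinor,
    Matrix.det_fin_three, Matrix.submatrix_apply, Matrix.of_apply, Matrix.cons_val, Fin.succAbove,
    Fin.reduceSucc, Fin.reduceCastSucc, Fin.reduceLT, Fin.isValue, ↓reduceIte, Fin.coe_ofNat_eq_mod,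
    map_add, map_sub, map_mul, map_pow, map_one, starRingEnd_self_apply]
  ring

theorem conj_centralConicNormCoeff (p q r : R) :
    conj (centralConicNormCoeff p q r) = -centralConicNormCoeff p q r := by
  simp only [centralConicNormCoeff, Matrix.det_fin_three, Matrix.of_apply, Matrix.cons_val,
    map_add, map_sub, map_mul, map_pow, map_one, starRingEnd_self_apply]
  ring

theorem conj_centralConicConstMinor (p q r : R) :
    conj (centralConicConstMinor p q r) = -centralConicConstMinor p q r := by
  simp only [centralConicConstMinor, Matrix.det_fin_three, Matrix.of_apply, Matrix.cons_val,
    map_add, map_sub, map_mul, map_pow, starRingEnd_self_apply]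
  ring

theorem centralConicSqCoeff_pairwise_mul (w₁ w₂ w₃ : R) :
    centralConicSqCoeff (w₁ * w₂) (w₁ * w₃) (w₂ * w₃) =
      conj (w₁ * w₂ * w₃) * detBCirc w₁ w₂ w₃ := by
  simp only [centralConicSqCoeff, detBCirc, Matrix.det_fin_three, Matrix.of_apply,
    Matrix.cons_val, map_mul]
  ring

theorem centralConicConstMinor_mul_detBCirc_mul_conj (w₁ w₂ w₃ : R) :
    centralConicConstMinor (w₁ * w₂) (w₁ * w₃) (w₂ * w₃) *
        (detBCirc w₁ w₂ w₃ * conj (detBCirc w₁ w₂ w₃)) =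
      w₁ * w₂ * w₃ * conj (w₁ * w₂ * w₃) *
        (w₁ * w₂ * w₃ * detACirc w₁ w₂ w₃ ^ 2 * conj (detBCirc w₁ w₂ w₃) -
          conj (w₁ * w₂ * w₃) * conj (detACirc w₁ w₂ w₃) ^ 2 * detBCirc w₁ w₂ w₃ +
          centralConicNormCoeff (w₁ * w₂) (w₁ * w₃) (w₂ * w₃) *
            (detACirc w₁ w₂ w₃ * conj (detACirc w₁ w₂ w₃))) := by
  simp only [centralConicNormCoeff, centralConicConstMinor, detACirc, detBCirc,
    Matrix.det_fin_three, Matrix.of_apply, Matrix.cons_val, map_add, map_sub, map_mul, map_pow,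
    starRingEnd_self_apply]
  ring

theorem detBCirc_mul_conj_mul_centralConicDet_eq_zero {w₁ w₂ w₃ u : R}
    (hu : detBCirc w₁ w₂ w₃ * u = w₁ * w₂ * w₃ * detACirc w₁ w₂ w₃) :
    detBCirc w₁ w₂ w₃ * conj (detBCirc w₁ w₂ w₃) *
      centralConicDet (w₁ * w₂) (w₁ * w₃) (w₂ * w₃) u = 0 := by
  have hu_conj : conj (detBCirc w₁ w₂ w₃) * conj u =
      conj (w₁ * w₂ * w₃) * conj (detACirc w₁ w₂ w₃) := by
    rw [← map_mul, hu, map_mul]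
  calc
    _ = conj (w₁ * w₂ * w₃) * conj (detBCirc w₁ w₂ w₃) * (detBCirc w₁ w₂ w₃ * u) ^ 2 -
          w₁ * w₂ * w₃ * detBCirc w₁ w₂ w₃ * (conj (detBCirc w₁ w₂ w₃) * conj u) ^ 2 +
          centralConicNormCoeff (w₁ * w₂) (w₁ * w₃) (w₂ * w₃) *
            (detBCirc w₁ w₂ w₃ * u * (conj (detBCirc w₁ w₂ w₃) * conj u)) -
          centralConicConstMinor (w₁ * w₂) (w₁ * w₃) (w₂ * w₃) *
            (detBCirc w₁ w₂ w₃ * conj (detBCirc w₁ w₂ w₃)) := by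
      simp only [centralConicDet_eq, centralConicSqCoeff_pairwise_mul, map_mul,
        starRingEnd_self_apply]
      ring
    _ = 0 := by
      rw [hu, hu_conj, centralConicConstMinor_mul_detBCirc_mul_conj]
      ring

end CommStarRing

theorem centralConicDet_div_eq_zero {K : Type*} [Field K] [StarRing K] {w₁ w₂ w₃ : K}
    (hB : detBCirc w₁ w₂ w₃ ≠ 0) :
    centralConicDet (w₁ * w₂) (w₁ * w₃) (w₂ * w₃)
      (w₁ * w₂ * w₃ * detACirc w₁ w₂ w₃ / detBCirc w₁ w₂ w₃) = 0 := by
  have norm_mul_eq_zero := detBCirc_mul_conj_mul_centralConicDet_eq_zero (mul_div_cancel₀ _ hB)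
  exact (mul_eq_zero.mp norm_mul_eq_zero).resolve_left (mul_ne_zero hB ((map_ne_zero conj).mpr hB))

theorem exists_ofReal_eq_I_mul_of_conj_eq_neg {z : ℂ} (hz : conj z = -z) :
    ∃ t : ℝ, Complex.I * z = t :=
  Complex.conj_eq_iff_real.mp (by simp [hz])

theorem exists_real_eq_I_mul_centralConicDet (p q r : ℂ) :
    ∃ f e : ℝ, ∀ u : ℂ,
      Complex.I * centralConicDet p q r u =
        Complex.I * centralConicSqCoeff p q r * u ^ 2 +
          conj (Complex.I * centralConicSqCoeff p q r) * conj u ^ 2 +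
          f * u * conj u + e := by
  obtain ⟨f, hf⟩ := exists_ofReal_eq_I_mul_of_conj_eq_neg (conj_centralConicNormCoeff p q r)
  obtain ⟨e, he⟩ := exists_ofReal_eq_I_mul_of_conj_eq_neg (conj_centralConicConstMinor p q r)
  refine ⟨f, -e, fun u => ?_⟩
  rw [centralConicDet_eq, Complex.ofReal_neg, ← hf, ← he, map_mul, Complex.conj_I]
  ring

theorem stmt_18 (w₁ w₂ w₃ : ℂ)
    (h₁ : w₁ ≠ 0) (h₂ : w₂ ≠ 0) (h₃ : w₃ ≠ 0)
    (h12 : w₁ ^ 2 ≠ w₂ ^ 2) (h13 : w₁ ^ 2 ≠ w₃ ^ 2) (h23 : w₂ ^ 2 ≠ w₃ ^ 2)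
    (detA detB u₀ : ℂ)
    (hdetA : detA = Matrix.det
      !![conj w₁ * conj w₂, conj w₁ * conj w₃, conj w₂ * conj w₃;
         w₃, w₂, w₁;
         conj w₃, conj w₂, conj w₁])
    (hdetB : detB = Matrix.det
      !![w₁ * (conj w₁) ^ 2, w₂ * (conj w₂) ^ 2, w₃ * (conj w₃) ^ 2;
         conj w₁, conj w₂, conj w₃;
         w₁, w₂, w₃])
    (hB : detB ≠ 0)
    (hu₀ : u₀ = w₁ * w₂ * w₃ * detA / detB) :
    ∃ (α β : ℂ) (f e : ℝ), ¬(α = 0 ∧ β = 0 ∧ f = 0 ∧ e = 0) ∧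
      ∀ u ∈ ({w₁ * w₂, -(w₁ * w₂), w₁ * w₃, -(w₁ * w₃), w₂ * w₃, -(w₂ * w₃), u₀} :
          Set ℂ),
        α * u ^ 2 + conj α * (conj u) ^ 2 + β * u + conj β * conj u +
          (f : ℂ) * u * conj u + (e : ℂ) = 0 := by
  subst hdetA hdetB hu₀
  obtain ⟨f, e, real_equation⟩ :=
    exists_real_eq_I_mul_centralConicDet (w₁ * w₂) (w₁ * w₃) (w₂ * w₃)
  refine ⟨Complex.I * centralConicSqCoeff (w₁ * w₂) (w₁ * w₃) (w₂ * w₃), 0, f, e,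
    fun h => ?_, fun u hu => ?_⟩
  · have sqCoeff_ne_zero : centralConicSqCoeff (w₁ * w₂) (w₁ * w₃) (w₂ * w₃) ≠ 0 := by
      rw [centralConicSqCoeff_pairwise_mul]
      exact mul_ne_zero ((map_ne_zero conj).mpr (mul_ne_zero (mul_ne_zero h₁ h₂) h₃)) hB
    exact mul_ne_zero Complex.I_ne_zero sqCoeff_ne_zero h.1
  · have on_conic : centralConicDet (w₁ * w₂) (w₁ * w₃) (w₂ * w₃) u = 0 := by
      rcases hu with rfl | rfl | rfl | rfl | rfl | rfl | rfl
      iterate 6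
        simp only [centralConicDet_neg, centralConicDet_self_left, centralConicDet_self_middle,
          centralConicDet_self_right]
      exact centralConicDet_div_eq_zero hB
    rw [map_zero, zero_mul, zero_mul, add_zero, add_zero, ← real_equation, on_conic, mul_zero]
end
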